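/- arXiv:1911.02137 — 4 statements merged into one kernel-verified Lean document; each statement's English description precedes it below -/
import Mathlib

section
/- Let n = 3·2^s with s ≥ 2 and F_n = ℚ(ζ_n + ζ_n⁻¹). Then every unit of the ring of integers of F_n has norm 1 down to ℚ, and there is no element of the ring of integers of F_n whose norm to ℚ equals 2. -/
namespace NormAux

lemma arith (m A : ℤ) (B : ℚ) (h : 4 * (m : ℚ) = A ^ 2 - 3 * B ^ 2) : m % 3 ≠ 2 := by
  have h3 : (3 * B) ^ 2 = ((3 * (A ^ 2 - 4 * m) : ℤ) : ℚ) := by push_cast; linarith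
  have hi : IsIntegral ℤ (3 * B) := by
    refine IsIntegral.of_pow (n := 2) (by norm_num) ?_
    rw [h3]; exact isIntegral_algebraMap (R := ℤ) (A := ℚ)
  obtain ⟨C, hC⟩ := IsIntegrallyClosed.isIntegral_iff.1 hi
  have hC' : (C : ℚ) = 3 * B := by simpa using hC
  rw [← hC'] at h3
  have h4 : C ^ 2 = 3 * (A ^ 2 - 4 * m) := by exact_mod_cast h3
  have h5 : (3 : ℤ) ∣ C := Int.prime_three.dvd_of_dvd_pow ⟨_, h4⟩
  obtain ⟨D, rfl⟩ := h5
  have h6 : A ^ 2 = 4 * m + 3 * D ^ 2 := by linarith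
  intro hm
  have h7 : A ^ 2 % 3 = 2 := by rw [h6]; omega
  have h8 : A % 3 = 0 ∨ A % 3 = 1 ∨ A % 3 = 2 := by omega
  rcases h8 with h | h | h <;> simp [pow_two, Int.mul_emod, h] at h7

lemma no_sq : ∀ r : ℚ, r ^ 2 ≠ 3 + 0 * r := by
  intro r hr
  have hi : IsIntegral ℤ r := by
    refine IsIntegral.of_pow (n := 2) (by norm_num) ?_
    rw [hr, zero_mul, add_zero]; exact isIntegral_algebraMap (R := ℤ) (A := ℚ) (x := 3)
  obtain ⟨C, hC⟩ := IsIntegrallyClosed.isIntegral_iff.1 hi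
  have hC' : (C : ℚ) = r := by simpa using hC
  rw [← hC'] at hr
  have h4 : C ^ 2 = 3 := by
    rw [zero_mul, add_zero] at hr; exact_mod_cast hr
  have : C ≤ 2 := by nlinarith
  have : -2 ≤ C := by nlinarith
  interval_cases C <;> omega

abbrev K := QuadraticAlgebra ℚ 3 0

instance : Fact (∀ r : ℚ, r ^ 2 ≠ 3 + 0 * r) := ⟨no_sq⟩

lemma quad_norm (y : K) (hy : IsIntegral ℤ y) (m : ℤ) (hm : Algebra.norm ℚ y = m) :
    m % 3 ≠ 2 := by
  have h1 : Algebra.norm ℚ y = y.norm := by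
    rw [← QuadraticAlgebra.det_toLinearMap_eq_norm, Algebra.norm_apply]
    rfl
  have h2 : IsIntegral ℤ (star y) := by
    have := hy.map (starRingEnd K).toIntAlgHom
    exact this
  have h3 := hy.add h2
  rw [← QuadraticAlgebra.algebraMap_trace_eq_add_star] at h3
  replace h3 := (isIntegral_algebraMap_iff (A := ℚ) (B := K) (algebraMap ℚ K).injective).1 h3
  obtain ⟨A, hA⟩ := IsIntegrallyClosed.isIntegral_iff.1 h3
  have hA' : (A : ℚ) = 2 * y.re := by simpa [QuadraticAlgebra.trace_def] using hA
  refine arith m A (2 * y.im) ?_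
  rw [← hm, h1, hA', QuadraticAlgebra.norm_def]; ring

lemma field_norm (L : Type*) [Field L] [CharZero L] [FiniteDimensional ℚ L] (t : L) (ht : t * t = 3)
    (x : L) (hx : IsIntegral ℤ x) (m : ℤ) (hm : Algebra.norm ℚ x = m) : m % 3 ≠ 2 := by
  let f : K →ₐ[ℚ] L := QuadraticAlgebra.lift ⟨t, by simp [ht, Algebra.smul_def]⟩
  let : Algebra K L := f.toRingHom.toAlgebra
  have : IsScalarTower ℚ K L := IsScalarTower.of_algebraMap_eq fun r => (f.commutes r).symm
  have : IsScalarTower ℤ K L := IsScalarTower.of_algebraMap_eq' (RingHom.ext_int _ _)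
  have : FiniteDimensional K L := FiniteDimensional.right ℚ K L
  refine quad_norm (Algebra.norm K x) (Algebra.isIntegral_norm K hx) m ?_
  rw [Algebra.norm_norm, hm]

lemma pow_mem (F : IntermediateField ℚ ℂ) (z : ℂ) (hz : z ≠ 0) (h : z + z⁻¹ ∈ F) (k : ℕ) :
    z ^ k + (z ^ k)⁻¹ ∈ F := by
  induction k using Nat.strong_induction_on with
  | _ k ih =>
    match k with
    | 0 => simpa using F.add_mem F.one_mem F.one_mem
    | 1 => simpa using h
    | k + 2 =>
      have := F.sub_mem (F.mul_mem h (ih (k+1) (by omega))) (ih k (by omega))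
      convert this using 1
      field_simp
      ring

lemma twelve (w : ℂ) (hw : IsPrimitiveRoot w 12) : (w + w⁻¹) * (w + w⁻¹) = 3 := by
  have h0 : w ≠ 0 := hw.ne_zero (by norm_num)
  have h6 : w ^ 6 ≠ 1 := hw.pow_ne_one_of_pos_of_lt (by norm_num) (by norm_num)
  have h4 : w ^ 4 ≠ 1 := hw.pow_ne_one_of_pos_of_lt (by norm_num) (by norm_num)
  have h12 : w ^ 12 = 1 := hw.pow_eq_one
  have h6' : w ^ 6 + 1 = 0 := by
    have : (w ^ 6 - 1) * (w ^ 6 + 1) = 0 := by linear_combination h12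
    exact (mul_eq_zero.1 this).resolve_left (sub_ne_zero.2 h6)
  have h2 : w ^ 2 + 1 ≠ 0 := fun h => h4 (by linear_combination (w ^ 2 - 1) * h)
  have : (w ^ 2 + 1) * (w ^ 4 - w ^ 2 + 1) = 0 := by linear_combination h6'
  have := (mul_eq_zero.1 this).resolve_left h2
  field_simp
  linear_combination this

end NormAux


/-- For `n = 3·2^s`, `s ≥ 2`, and `F = ℚ(ζ_n + ζ_n⁻¹)`: every unit of the ring of
integers of `F` has norm `1`, and no element of the ring of integers has norm `2`. -/
theorem units_norm_one_and_no_norm_two (s : ℕ) (hs : 2 ≤ s) (n : ℕ)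
    (hn : n = 3 * 2 ^ s) (ζ : ℂ) (hζ : IsPrimitiveRoot ζ n)
    (F : IntermediateField ℚ ℂ) (hF : F = IntermediateField.adjoin ℚ {ζ + ζ⁻¹})
    [FiniteDimensional ℚ ↥F] :
    (∀ u : (NumberField.RingOfIntegers ↥F)ˣ,
      Algebra.norm ℚ (((u : NumberField.RingOfIntegers ↥F) : ↥F)) = 1) ∧
    ¬ ∃ x : NumberField.RingOfIntegers ↥F, Algebra.norm ℚ ((x : ↥F)) = 2 := by
  have hpos : 0 < n := by rw [hn]; positivity
  have hn12 : n = 2 ^ (s - 2) * 12 := by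
    obtain ⟨k, rfl⟩ := Nat.exists_eq_add_of_le hs
    rw [hn, Nat.add_sub_cancel_left]; ring
  have hw : IsPrimitiveRoot (ζ ^ 2 ^ (s - 2)) 12 := hζ.pow hpos hn12
  have hmem : ζ + ζ⁻¹ ∈ F := by
    rw [hF]; exact IntermediateField.mem_adjoin_simple_self ℚ _
  have ht := NormAux.pow_mem F ζ (hζ.ne_zero hpos.ne') hmem (2 ^ (s - 2))
  have ht3 := NormAux.twelve _ hw
  have key := NormAux.field_norm F ⟨_, ht⟩ (Subtype.ext ht3)
  have : NumberField F := ⟨⟩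
  refine ⟨fun u => ?_, ?_⟩
  · have h := NumberField.isUnit_iff_norm.1 u.isUnit
    rw [RingOfIntegers.coe_norm] at h
    rcases eq_or_eq_neg_of_abs_eq h with h | h
    · exact h
    · exact absurd rfl (key _ (NumberField.RingOfIntegers.isIntegral_coe _) (-1) (by rw [h]; norm_num))
  · rintro ⟨x, hx⟩
    exact key _ (NumberField.RingOfIntegers.isIntegral_coe x) 2 (by rw [hx]; norm_num) rfl
end

section
/- Let n = 2^s or n = 3·2^s with n ≥ 8, K_n = ℚ(ζ_n), and R_n = ℤ[ζ_n, 1/2]. If α ∈ R_n satisfies α·ᾱ = 1 (where ᾱ denotes complex conjugation), then α is a root of unity in K_n, i.e., α ∈ μ_n. -/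
lemma aux_res {B : Type*} [CommRing B] (z : B) (h2 : (2 : B) = 0)
    (hz : z = 1 ∨ 1 + z + z ^ 2 = 0) (b : B) (hb : b ∈ Algebra.adjoin ℤ ({z} : Set B)) :
    b = 0 ∨ ∃ k : ℕ, b = z ^ k := by
  have hz3 : z ^ 3 = 1 := by
    rcases hz with h | h
    · rw [h]; simp
    · linear_combination (z - 1) * h
  have hred : ∀ k : ℕ, z ^ k = 1 ∨ z ^ k = z ∨ z ^ k = z ^ 2 := by
    intro k
    induction k with
    | zero => left; simp
    | succ k ih =>
      rcases ih with h | h | h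
      · right; left; rw [pow_succ, h, one_mul]
      · right; right; rw [pow_succ, h, sq]
      · left; rw [pow_succ, h, ← pow_succ, hz3]
  have hadd : ∀ i j : ℕ, z ^ i + z ^ j = 0 ∨ ∃ k : ℕ, z ^ i + z ^ j = z ^ k := by
    intro i j
    rcases hz with h | h
    · left; rw [h]; simp only [one_pow]; linear_combination h2
    · rcases hred i with hi | hi | hi <;> rcases hred j with hj | hj | hj <;> rw [hi, hj]
      · left; linear_combination h2
      · right; exact ⟨2, by linear_combination h - z ^ 2 * h2⟩
      · right; exact ⟨1, by linear_combination h - z * h2⟩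
      · right; exact ⟨2, by linear_combination h - z ^ 2 * h2⟩
      · left; linear_combination z * h2
      · right; exact ⟨0, by linear_combination h - h2⟩
      · right; exact ⟨1, by linear_combination h - z * h2⟩
      · right; exact ⟨0, by linear_combination h - h2⟩
      · left; linear_combination z ^ 2 * h2
  induction hb using Algebra.adjoin_induction with
  | mem x hx => right; exact ⟨1, by simpa using hx⟩
  | algebraMap r =>
    rcases Int.even_or_odd' r with ⟨c, h | h⟩
    · left; rw [h]; simp [h2]
    · right; refine ⟨0, ?_⟩; rw [h]; simp [h2]
  | add x y _ _ hx hy =>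
    rcases hx with hx | ⟨i, hx⟩ <;> rcases hy with hy | ⟨j, hy⟩ <;> rw [hx, hy]
    · left; simp
    · right; exact ⟨j, by simp⟩
    · right; exact ⟨i, by simp⟩
    · exact hadd i j
  | mul x y _ _ hx hy =>
    rcases hx with hx | ⟨i, hx⟩ <;> rcases hy with hy | ⟨j, hy⟩ <;> rw [hx, hy]
    · left; simp
    · left; simp
    · left; simp
    · right; exact ⟨i + j, by rw [pow_add]⟩

lemma aux_descent (O : Subalgebra ℤ ℂ) (ζ π : ℂ)
    (hconj : ∀ β ∈ O, (starRingEnd ℂ) β ∈ O) (hζO : ζ ∈ O) (hπ : π ∈ O)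
    (hππ : ∃ d ∈ O, (starRingEnd ℂ) π = π * d)
    (hM : ∃ N : ℕ, ∃ d ∈ O, π ^ N = 2 * d)
    (hhalf : (2⁻¹ : ℂ) ∉ O) (nζ : ζ * (starRingEnd ℂ) ζ = 1)
    (res : ∀ β ∈ O, (∃ d ∈ O, β = π * d) ∨ ∃ k : ℕ, ∃ d ∈ O, β = ζ ^ k + π * d)
    (α : ℂ) (hα : ∃ k : ℕ, 2 ^ k * α ∈ O) (h1 : α * (starRingEnd ℂ) α = 1)
    (hπ0 : π ≠ 0) : α ∈ O := by
  obtain ⟨c, hc, hππ⟩ := hππ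
  obtain ⟨M, e, he, hM⟩ := hM
  have hN : ∃ N : ℕ, π ^ N * α ∈ O := by
    obtain ⟨k, hk⟩ := hα
    refine ⟨M * k, ?_⟩
    have : π ^ (M * k) * α = e ^ k * (2 ^ k * α) := by
      rw [pow_mul, hM]; ring
    rw [this]
    exact O.mul_mem (O.pow_mem he k) hk
  have hnu : ¬ ∃ d ∈ O, 1 = π * d := by
    rintro ⟨d, hd, h⟩
    apply hhalf
    have : (2⁻¹ : ℂ) = e * d ^ M := by
      have h3 : (1 : ℂ) = 2 * e * d ^ M := by
        rw [← hM, ← mul_pow, ← h, one_pow]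
      field_simp
      linear_combination h3
    rw [this]
    exact O.mul_mem he (O.pow_mem hd M)
  have key : ∀ β ∈ O, (∃ d ∈ O, β * (starRingEnd ℂ) β = π * d) → ∃ d ∈ O, β = π * d := by
    rintro β hβ ⟨f, hf, hbf⟩
    rcases res β hβ with h | ⟨k, d, hd, h⟩
    · exact h
    · exfalso
      apply hnu
      have hk : ζ ^ k * (starRingEnd ℂ) ζ ^ k = 1 := by rw [← mul_pow, nζ, one_pow]
      have hcβ : (starRingEnd ℂ) β = (starRingEnd ℂ) ζ ^ k + π * c * (starRingEnd ℂ) d := by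
        rw [h]; simp [hππ]
      have hζc := O.pow_mem (hconj ζ hζO) k
      have hdc := hconj d hd
      refine ⟨f - (β * (c * (starRingEnd ℂ) d) + d * (starRingEnd ℂ) ζ ^ k), ?_, ?_⟩
      · exact O.sub_mem hf (O.add_mem (O.mul_mem hβ (O.mul_mem hc hdc)) (O.mul_mem hd hζc))
      · linear_combination -hk + hbf - β * hcβ + (- (starRingEnd ℂ) ζ ^ k) * h
  have step : ∀ N : ℕ, π ^ (N + 1) * α ∈ O → π ^ N * α ∈ O := by
    intro N hN
    obtain ⟨d, hd, h⟩ := key _ hN ⟨π ^ N * (π * c) ^ (N + 1),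
      O.mul_mem (O.pow_mem hπ _) (O.pow_mem (O.mul_mem hπ hc) _), by
        rw [map_mul, map_pow, hππ]
        linear_combination (π ^ (N + 1) * (π * c) ^ (N + 1)) * h1⟩
    have : π ^ N * α = d := by
      apply mul_left_cancel₀ hπ0
      rw [← h]; ring
    rw [this]; exact hd
  obtain ⟨N, hN⟩ := hN
  induction N with
  | zero => simpa using hN
  | succ N ih => exact ih (step N hN)

lemma aux_pow (O : Subalgebra ℤ ℂ) (x : ℂ) (hx : x ∈ O) (t : ℕ) :
    ∃ d ∈ O, (1 - x) ^ 2 ^ t = 1 - x ^ 2 ^ t + 2 * d := by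
  induction t with
  | zero => exact ⟨0, O.zero_mem, by simp⟩
  | succ t ih =>
    obtain ⟨d, hd, h⟩ := ih
    have hy : x ^ 2 ^ t ∈ O := O.pow_mem hx _
    have h2 : (2 : ℂ) ∈ O := by simpa using O.natCast_mem 2
    refine ⟨(x ^ 2 ^ t) ^ 2 - x ^ 2 ^ t + 2 * ((1 - x ^ 2 ^ t) * d) + 2 * d ^ 2, ?_, ?_⟩
    · exact O.add_mem (O.add_mem (O.sub_mem (O.pow_mem hy 2) hy)
        (O.mul_mem h2 (O.mul_mem (O.sub_mem O.one_mem hy) hd))) (O.mul_mem h2 (O.pow_mem hd 2))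
    · rw [pow_succ, pow_mul, h]; ring

lemma aux_kronecker (n : ℕ) (hn0 : n ≠ 0) (hne : Even n) (ζ : ℂ) (hζ : IsPrimitiveRoot ζ n)
    (α : ℂ) (hα : α ∈ Algebra.adjoin ℤ ({ζ} : Set ℂ))
    (h1 : α * (starRingEnd ℂ) α = 1) : ∃ k : ℕ, α = ζ ^ k := by
  have : NeZero n := ⟨hn0⟩
  rw [Algebra.adjoin_singleton_eq_range_aeval] at hα
  obtain ⟨p, hp⟩ := hα
  have hp : Polynomial.aeval ζ p = α := hp
  let K := IntermediateField.adjoin ℚ ({ζ} : Set ℂ)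
  have hcyc : IsCyclotomicExtension {n} ℚ K :=
    by
      have hζi : IsIntegral ℚ ζ := (hζ.isIntegral (Nat.pos_of_ne_zero hn0)).tower_top
      change IsCyclotomicExtension {n} ℚ (IntermediateField.adjoin ℚ ({ζ} : Set ℂ)).toSubalgebra
      rw [IntermediateField.adjoin_simple_toSubalgebra_of_isAlgebraic hζi.isAlgebraic]
      exact hζ.adjoin_isCyclotomicExtension ℚ
  have hnf : NumberField K := IsCyclotomicExtension.numberField {n} ℚ K
  let z : K := ⟨ζ, IntermediateField.mem_adjoin_simple_self ℚ ζ⟩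
  have hz : IsPrimitiveRoot z n := by
    apply IsPrimitiveRoot.of_map_of_injective (f := algebraMap K ℂ) _ (algebraMap K ℂ).injective
    exact hζ
  let a : K := Polynomial.aeval z p
  have haeval : ∀ (φ : K →+* ℂ) (y : K), φ (Polynomial.aeval y p) = Polynomial.aeval (φ y) p := by
    intro φ y
    exact (Polynomial.aeval_algHom_apply φ.toIntAlgHom y p).symm
  have haα : algebraMap K ℂ a = α := by
    rw [← hp]; exact haeval (algebraMap K ℂ) z
  have hcpow : ∀ w : ℂ, w ^ n = 1 → (starRingEnd ℂ) w = w ^ (n - 1) := by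
    intro w hw
    have hnorm : ‖w‖ = 1 := Complex.norm_eq_one_of_pow_eq_one hw hn0
    have hw0 : w ≠ 0 := by rintro rfl; simp at hnorm
    apply mul_left_cancel₀ hw0
    rw [Complex.mul_conj, Complex.normSq_eq_norm_sq, hnorm, ← pow_succ',
      Nat.sub_add_cancel (Nat.pos_of_ne_zero hn0), hw]
    simp
  have hcp : ∀ w : ℂ, (starRingEnd ℂ) (Polynomial.aeval w p)
      = Polynomial.aeval ((starRingEnd ℂ) w) p := by
    intro w
    exact (Polynomial.aeval_algHom_apply (starRingEnd ℂ).toIntAlgHom w p).symm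
  have hab : a * Polynomial.aeval (z ^ (n - 1)) p = 1 := by
    apply (algebraMap K ℂ).injective
    rw [map_mul, haα, haeval, map_one, map_pow]
    change α * Polynomial.aeval (ζ ^ (n - 1)) p = 1
    rw [← hcpow ζ hζ.pow_eq_one, ← hcp, hp, h1]
  have hnorm : ∀ φ : K →+* ℂ, ‖φ a‖ = 1 := by
    intro φ
    have h := congrArg φ hab
    rw [map_mul, haeval, haeval, map_one, map_pow, ← hcpow (φ z) (by
      rw [← map_pow, hz.pow_eq_one, map_one]), ← hcp, Complex.mul_conj,
      Complex.normSq_eq_norm_sq] at h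
    have h' : ‖φ a‖ ^ 2 = 1 := by
      rw [haeval]; exact_mod_cast h
    exact (pow_eq_one_iff_of_nonneg (norm_nonneg (φ a)) two_ne_zero).mp h'
  have hint : IsIntegral ℤ a := by
    have hzi : IsIntegral ℤ z := hz.isIntegral (Nat.pos_of_ne_zero hn0)
    have hle : Algebra.adjoin ℤ ({z} : Set K) ≤ integralClosure ℤ K := by
      apply Algebra.adjoin_le
      rintro x rfl
      exact hzi
    exact hle (Polynomial.aeval_mem_adjoin_singleton ℤ _)
  obtain ⟨m, hm, ham⟩ := NumberField.Embeddings.pow_eq_one_of_norm_eq_one K ℂ hint hnorm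
  have ho : IsPrimitiveRoot a (orderOf a) := IsPrimitiveRoot.orderOf a
  have hfin : orderOf a ≠ 0 := (orderOf_pos_iff.mpr (isOfFinOrder_iff_pow_eq_one.mpr ⟨m, hm, ham⟩)).ne'
  have : NeZero (orderOf a) := ⟨hfin⟩
  have hdvd := NumberField.Units.dvd_torsionOrder_of_isPrimitiveRoot ho
  rw [IsCyclotomicExtension.Rat.torsionOrder_eq (n := n) (K := K), if_pos hne] at hdvd
  have han : a ^ n = 1 := orderOf_dvd_iff_pow_eq_one.mp hdvd
  have : α ^ n = 1 := by rw [← haα, ← map_pow, han, map_one]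
  obtain ⟨k, -, hk⟩ := hζ.eq_pow_of_pow_eq_one this
  exact ⟨k, hk.symm⟩

/-- For `n = 2^s` or `n = 3·2^s` with `n ≥ 8`: if `α ∈ R_n = ℤ[ζ_n, 1/2]` satisfies
`α·ᾱ = 1`, then `α` is a root of unity in `ℚ(ζ_n)`, i.e. a power of `ζ_n`. -/
theorem norm_one_element_is_root_of_unity (s n : ℕ) (hn : n = 2 ^ s ∨ n = 3 * 2 ^ s)
    (hn8 : 8 ≤ n) (ζ : ℂ) (hζ : IsPrimitiveRoot ζ n) (α : ℂ)
    (hα : α ∈ Algebra.adjoin ℤ ({ζ, 2⁻¹} : Set ℂ))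
    (h1 : α * (starRingEnd ℂ) α = 1) :
    ∃ k : ℕ, α = ζ ^ k := by
  have hn0 : n ≠ 0 := by omega
  obtain ⟨t, rfl⟩ : ∃ t, s = t + 1 := by
    cases s with
    | zero => simp at hn; omega
    | succ t => exact ⟨t, rfl⟩
  have hne : Even n := by
    rcases hn with h | h <;> rw [h, pow_succ]
    · exact ⟨2 ^ t, by ring⟩
    · exact ⟨3 * 2 ^ t, by ring⟩
  set O := Algebra.adjoin ℤ ({ζ} : Set ℂ) with hO
  have hζO : ζ ∈ O := Algebra.subset_adjoin rfl
  have nζ : ζ * (starRingEnd ℂ) ζ = 1 := by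
    rw [Complex.mul_conj, Complex.normSq_eq_norm_sq,
      Complex.norm_eq_one_of_pow_eq_one hζ.pow_eq_one hn0]
    simp
  have hcζ : (starRingEnd ℂ) ζ ∈ O := by
    have : (starRingEnd ℂ) ζ = ζ ^ (n - 1) := by
      apply mul_left_cancel₀ (hζ.ne_zero hn0)
      rw [nζ, ← pow_succ', Nat.sub_add_cancel (by omega), hζ.pow_eq_one]
    rw [this]; exact O.pow_mem hζO _
  have hconj : ∀ β ∈ O, (starRingEnd ℂ) β ∈ O := by
    intro β hβ
    induction hβ using Algebra.adjoin_induction with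
    | mem x hx => rw [Set.mem_singleton_iff.mp hx]; exact hcζ
    | algebraMap r => simpa using O.intCast_mem r
    | add x y _ _ hx hy => rw [map_add]; exact O.add_mem hx hy
    | mul x y _ _ hx hy => rw [map_mul]; exact O.mul_mem hx hy
  have hhalf : (2⁻¹ : ℂ) ∉ O := by
    intro h
    have hi : IsIntegral ℤ (2⁻¹ : ℂ) := by
      have hle : O ≤ integralClosure ℤ ℂ := by
        apply Algebra.adjoin_le
        rintro x rfl
        exact hζ.isIntegral (by omega)
      exact hle h
    have hi' : IsIntegral ℤ (2⁻¹ : ℚ) := by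
      have : algebraMap ℚ ℂ (2⁻¹) = 2⁻¹ := by simp
      rw [← this] at hi
      exact (isIntegral_algebraMap_iff (algebraMap ℚ ℂ).injective).mp hi
    obtain ⟨y, hy⟩ := IsIntegrallyClosed.isIntegral_iff.mp hi'
    have : (y : ℚ) * 2 = 1 := by
      have : (y : ℚ) = 2⁻¹ := by simpa using hy
      rw [this]; norm_num
    have : y * 2 = 1 := by exact_mod_cast this
    omega
  have hk : ∃ k : ℕ, 2 ^ k * α ∈ O := by
    have h2 : (2 : ℂ) ∈ O := by simpa using O.natCast_mem 2
    clear h1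
    induction hα using Algebra.adjoin_induction with
    | mem x hx =>
      rcases hx with rfl | hx
      · exact ⟨0, by simpa using hζO⟩
      · refine ⟨1, ?_⟩
        rw [Set.mem_singleton_iff.mp hx]; simp
    | algebraMap r => exact ⟨0, by simpa using O.intCast_mem r⟩
    | add x y _ _ hx hy =>
      obtain ⟨i, hi⟩ := hx
      obtain ⟨j, hj⟩ := hy
      refine ⟨i + j, ?_⟩
      have : (2 : ℂ) ^ (i + j) * (x + y) = 2 ^ j * (2 ^ i * x) + 2 ^ i * (2 ^ j * y) := by ring
      rw [this]
      exact O.add_mem (O.mul_mem (O.pow_mem h2 _) hi) (O.mul_mem (O.pow_mem h2 _) hj)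
    | mul x y _ _ hx hy =>
      obtain ⟨i, hi⟩ := hx
      obtain ⟨j, hj⟩ := hy
      refine ⟨i + j, ?_⟩
      have : (2 : ℂ) ^ (i + j) * (x * y) = (2 ^ i * x) * (2 ^ j * y) := by ring
      rw [this]
      exact O.mul_mem hi hj
  obtain ⟨x, hxO, hx, hxcase⟩ : ∃ x ∈ O, IsPrimitiveRoot x (2 ^ (t + 1)) ∧
      (x = ζ ∨ (x = ζ ^ 3 ∧ 1 + ζ ^ 2 ^ (t + 1) + (ζ ^ 2 ^ (t + 1)) ^ 2 = 0)) := by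
    rcases hn with h | h
    · exact ⟨ζ, hζO, h ▸ hζ, Or.inl rfl⟩
    · refine ⟨ζ ^ 3, O.pow_mem hζO _, hζ.pow (by omega) h, Or.inr ⟨rfl, ?_⟩⟩
      have hw : IsPrimitiveRoot (ζ ^ 2 ^ (t + 1)) 3 := hζ.pow (by omega) (by rw [h]; ring)
      have := hw.geom_sum_eq_zero (by norm_num)
      simpa [Finset.sum_range_succ] using this
  have hxneg : x ^ 2 ^ t = -1 := by
    have : IsPrimitiveRoot (x ^ 2 ^ t) 2 := hx.pow (by positivity) (by rw [pow_succ])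
    exact this.eq_neg_one_of_two_right
  have nx : x * (starRingEnd ℂ) x = 1 := by
    rw [Complex.mul_conj, Complex.normSq_eq_norm_sq,
      Complex.norm_eq_one_of_pow_eq_one hx.pow_eq_one (by positivity)]
    simp
  have hπO : 1 - x ∈ O := O.sub_mem O.one_mem hxO
  have h2π : ∃ d ∈ O, (2 : ℂ) = (1 - x) * d := by
    refine ⟨∑ i ∈ Finset.range (2 ^ t), x ^ i, O.sum_mem fun i _ => O.pow_mem hxO i, ?_⟩
    rw [mul_neg_geom_sum, hxneg]; norm_num
  have hπ0 : 1 - x ≠ 0 := by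
    intro h
    obtain ⟨d, -, hd⟩ := h2π
    rw [h] at hd; simp at hd
  refine aux_kronecker n hn0 hne ζ hζ α ?_ h1
  refine aux_descent O ζ (1 - x) hconj hζO hπO ⟨-(starRingEnd ℂ) x, O.neg_mem (hconj x hxO), ?_⟩
    ?_ hhalf nζ ?_ α hk h1 hπ0
  · rw [map_sub, map_one]; linear_combination -nx
  · obtain ⟨d, hd, h⟩ := aux_pow O x hxO (t + 1)
    exact ⟨2 ^ (t + 1), d, hd, by rw [h, hx.pow_eq_one]; ring⟩
  · intro β hβ
    let π' : O := ⟨1 - x, hπO⟩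
    let z' : O := ⟨ζ, hζO⟩
    let I : Ideal O := Ideal.span {π'}
    let q : O →+* O ⧸ I := Ideal.Quotient.mk I
    have hqπ : q π' = 0 := Ideal.Quotient.eq_zero_iff_mem.mpr (Ideal.mem_span_singleton_self _)
    have hq2 : (2 : O ⧸ I) = 0 := by
      obtain ⟨d, hd, h⟩ := h2π
      have h' : (2 : O) = π' * ⟨d, hd⟩ := Subtype.ext h
      have := congrArg q h'
      rw [map_mul, hqπ, zero_mul] at this
      rw [map_ofNat] at this
      exact this
    have hqz : q z' = 1 ∨ 1 + q z' + q z' ^ 2 = 0 := by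
      rcases hxcase with h | ⟨h, h3⟩
      · left
        have h' : z' = 1 - π' := Subtype.ext (by simp [z', π', h])
        rw [h', map_sub, hqπ, map_one, sub_zero]
      · right
        have h' : z' ^ 3 = 1 - π' := Subtype.ext (by simp [z', π', h])
        have hz3 : q z' ^ 3 = 1 := by
          rw [← map_pow, h', map_sub, hqπ, map_one, sub_zero]
        have h3' : 1 + z' ^ 2 ^ (t + 1) + (z' ^ 2 ^ (t + 1)) ^ 2 = 0 := Subtype.ext h3
        have h4 := congrArg q h3'
        simp only [map_add, map_one, map_pow, map_zero] at h4
        have h5 : ∀ r : ℕ, q z' ^ 2 ^ r = q z' ∨ q z' ^ 2 ^ r = q z' ^ 2 := by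
          intro r
          induction r with
          | zero => left; simp
          | succ r ih =>
            rw [pow_succ, pow_mul]
            rcases ih with h | h <;> rw [h]
            · right; rfl
            · left; linear_combination q z' * hz3
        rcases h5 (t + 1) with h | h <;> rw [h] at h4
        · exact h4
        · linear_combination h4 - q z' * hz3
    have hmem : q ⟨β, hβ⟩ ∈ Algebra.adjoin ℤ ({q z'} : Set (O ⧸ I)) := by
      have hβ' := hβ
      rw [hO, Algebra.adjoin_singleton_eq_range_aeval] at hβ'
      obtain ⟨p, hp⟩ := hβ'
      have hp : Polynomial.aeval ζ p = β := hp
      have h6 : (⟨β, hβ⟩ : O) = Polynomial.aeval z' p := by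
        apply Subtype.ext
        change β = O.val (Polynomial.aeval z' p)
        rw [← Polynomial.aeval_algHom_apply]
        exact hp.symm
      have h7 : q (Polynomial.aeval z' p) = Polynomial.aeval (q z') p :=
        (Polynomial.aeval_algHom_apply q.toIntAlgHom z' p).symm
      rw [h6, h7]
      exact Polynomial.aeval_mem_adjoin_singleton ℤ _
    rcases aux_res (q z') hq2 hqz _ hmem with h | ⟨k, h⟩
    · left
      obtain ⟨d, hd⟩ := Ideal.mem_span_singleton'.mp (Ideal.Quotient.eq_zero_iff_mem.mp h)
      refine ⟨d, d.2, ?_⟩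
      have := congrArg Subtype.val hd
      rw [mul_comm]; exact this.symm
    · right
      rw [← map_pow] at h
      obtain ⟨d, hd⟩ := Ideal.mem_span_singleton'.mp (Ideal.Quotient.eq.mp h)
      refine ⟨k, d, d.2, ?_⟩
      have : (d : ℂ) * (1 - x) = β - ζ ^ k := congrArg Subtype.val hd
      linear_combination -this
end

section
/- Let O_L/O_M be a quadratic extension of Dedekind domains with Galois group generated by σ, and ATr(x) = x - σ(x). If two O_M-orders O, O' of O_L satisfy ATr(O) = ATr(O'), then O = O'. -/
/-- If two `O_M`-orders `O, O'` of `O_L` have the same antitrace image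
`ATr(O) = ATr(O')` (where `ATr(x) = x - σ(x)`), then `O = O'`. -/
theorem order_determined_by_antitrace (A M L : Type) [CommRing A] [IsDedekindDomain A]
    [Field M] [Field L] [Algebra A M] [IsFractionRing A M]
    [Algebra M L] [Algebra A L] [IsScalarTower A M L]
    (h2 : Module.finrank M L = 2)
    [IsDedekindDomain (integralClosure A L)]
    [Module.Finite A (integralClosure A L)]
    (σ : L ≃ₐ[M] L) (hσ : σ ≠ AlgEquiv.refl)
    (hgal : ∀ τ : L ≃ₐ[M] L, τ = AlgEquiv.refl ∨ τ = σ)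
    (O O' : Subalgebra A L) (hO : O ≤ integralClosure A L) (hO' : O' ≤ integralClosure A L)
    (h : (fun x : L => x - σ x) '' (O : Set L) = (fun x : L => x - σ x) '' (O' : Set L)) :
    O = O' := by
  have fd : FiniteDimensional M L := Module.finite_of_finrank_pos (by omega)
  have hcard : Nat.card (L ≃ₐ[M] L) = 2 := by
    rw [Nat.card_eq_two_iff]
    refine ⟨AlgEquiv.refl, σ, fun e => hσ e.symm, ?_⟩
    ext τ
    simpa using hgal τ
  have gal : IsGalois M L := IsGalois.of_card_aut_eq_finrank M L (by rw [hcard, h2])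
  have fixed : ∀ z : L, σ z = z → z ∈ integralClosure A L → ∃ a : A, algebraMap A L a = z := by
    intro z hz hi
    have hb : z ∈ (⊥ : IntermediateField M L) := by
      rw [IsGalois.mem_bot_iff_fixed]
      intro τ
      rcases hgal τ with rfl | rfl
      · rfl
      · exact hz
    obtain ⟨m, rfl⟩ := IntermediateField.mem_bot.1 hb
    have hm : IsIntegral A m :=
      (isIntegral_algebraMap_iff (algebraMap M L).injective).1 hi
    obtain ⟨a, rfl⟩ := IsIntegrallyClosed.isIntegral_iff.1 hm
    exact ⟨a, IsScalarTower.algebraMap_apply A M L a⟩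
  have key : ∀ P Q : Subalgebra A L, P ≤ integralClosure A L → Q ≤ integralClosure A L →
      (fun x : L => x - σ x) '' (P : Set L) = (fun x : L => x - σ x) '' (Q : Set L) → P ≤ Q := by
    intro P Q hP hQ e x hx
    have hm : x - σ x ∈ (fun x : L => x - σ x) '' (Q : Set L) := e ▸ ⟨x, hx, rfl⟩
    obtain ⟨y, hy, hxy⟩ := hm
    have hxy' : y - σ y = x - σ x := hxy
    obtain ⟨a, ha⟩ := fixed (x - y) (by rw [map_sub]; linear_combination hxy')
      (sub_mem (hP hx) (hQ hy))
    have : x = y + algebraMap A L a := by rw [ha]; ring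
    rw [this]
    exact add_mem hy (Q.algebraMap_mem a)
  exact le_antisymm (key O O' hO hO' h) (key O' O hO' hO h.symm)
end

section
/- Suppose a group Γ acts on a tree Δ with finite stabilizers and without inversions. Then there is a short exact sequence 1 → Γ_f → Γ → π₁(Γ\Δ) → 1, where Γ_f is the subgroup of Γ generated by all elements of finite order; in particular, the corank of Γ (the maximal rank of a free quotient of Γ) equals the first Betti number of the finite quotient graph Γ\Δ. -/
namespace TreeAct

section pot
variable {V F : Type} [Group F]

def wt {Δ : SimpleGraph V} (μ : V → V → F) : ∀ {u v : V}, Δ.Walk u v → F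
  | _, _, .nil => 1
  | u, _, .cons (v := w) _ p => μ u w * wt μ p

lemma wt_concat {Δ : SimpleGraph V} (μ : V → V → F) {u v w : V} (p : Δ.Walk u v)
    (h : Δ.Adj v w) : wt μ (p.concat h) = wt μ p * μ v w := by
  induction p with
  | nil => simp [SimpleGraph.Walk.concat, wt]
  | cons h' p ih => simp [wt, ih, mul_assoc]

lemma exists_pot (Δ : SimpleGraph V) (ht : Δ.IsTree) (μ : V → V → F)
    (hμ : ∀ u v, Δ.Adj u v → μ u v * μ v u = 1) (v0 : V) :
    ∃ p : V → F, p v0 = 1 ∧ ∀ u v, Δ.Adj u v → p v = p u * μ u v := by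
  classical
  choose P hP hU using fun v => ht.existsUnique_path v0 v
  have key : ∀ u v, (h : Δ.Adj u v) → v ∉ (P u).support →
      wt μ (P v) = wt μ (P u) * μ u v := by
    intro u v h hv
    rw [← wt_concat μ (P u) h, hU v _ ((hP u).concat hv h)]
  refine ⟨fun v => wt μ (P v), ?_, ?_⟩
  · change wt μ (P v0) = 1
    rw [← hU v0 .nil .nil]; rfl
  · intro u v h
    by_cases hv : v ∈ (P u).support
    · have h1 : u ∉ (P v).support :=
        ht.isAcyclic.ne_mem_support_of_support_of_adj_of_isPath (hP u) (hP v) h hv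
      have := key v u h.symm h1
      simp only [this, mul_assoc, hμ v u h.symm, mul_one]
    · exact key u v h hv

lemma conn_ind (Δ : SimpleGraph V) (hc : Δ.Connected) (P : V → Prop) (v0 : V) (h0 : P v0)
    (h : ∀ u v, Δ.Adj u v → P u → P v) (v : V) : P v := by
  obtain ⟨w⟩ := hc.preconnected v0 v
  induction w with
  | nil => exact h0
  | cons ha p ih => exact ih (h _ _ ha h0)

end pot

lemma exists_B (R X : Type) [Finite R] (bar : R → R) (hbar : ∀ e, bar (bar e) = e)
    (hbne : ∀ e, bar e ≠ e) (τ : X → R) (hτ : Function.Injective τ)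
    (hτb : ∀ x y, τ x ≠ bar (τ y)) :
    ∃ B : Set R, (∀ e ∈ B, bar e ∉ B) ∧ (∀ e ∈ B, ∀ x, e ≠ τ x ∧ e ≠ bar (τ x)) ∧
      (∀ e, e ∈ B ∨ bar e ∈ B ∨ ∃ x, e = τ x ∨ e = bar (τ x)) ∧
      Nat.card R = 2 * (Nat.card B + Nat.card X) := by
  classical
  obtain ⟨n, ⟨f⟩⟩ := Finite.exists_equiv_fin R
  have hbi : Function.Injective bar := fun a b h => by rw [← hbar a, h, hbar]
  let B : Set R := {e | f e < f (bar e) ∧ ∀ x, e ≠ τ x ∧ e ≠ bar (τ x)}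
  have h1 : ∀ e ∈ B, bar e ∉ B := by
    rintro e ⟨h, _⟩ ⟨h', _⟩
    rw [hbar] at h'
    exact lt_asymm h h'
  have h2 : ∀ e ∈ B, ∀ x, e ≠ τ x ∧ e ≠ bar (τ x) := fun e he => he.2
  have h3 : ∀ e, e ∈ B ∨ bar e ∈ B ∨ ∃ x, e = τ x ∨ e = bar (τ x) := by
    intro e
    by_cases hx : ∃ x, e = τ x ∨ e = bar (τ x)
    · exact .inr (.inr hx)
    push Not at hx
    rcases lt_trichotomy (f e) (f (bar e)) with h | h | h
    · exact .inl ⟨h, hx⟩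
    · exact absurd (f.injective h).symm (hbne e)
    · refine .inr (.inl ⟨by rwa [hbar], fun x => ⟨fun h => (hx x).2 ?_, fun h => (hx x).1 ?_⟩⟩)
      · rw [← h, hbar]
      · exact hbi h
  refine ⟨B, h1, h2, h3, ?_⟩
  have : Finite X := Finite.of_injective τ hτ
  let j : B ⊕ X → R := Sum.elim (fun b => b.1) τ
  have hj : Function.Injective j := by
    rintro (a | a) (b | b) h
    · exact congrArg _ (Subtype.ext h)
    · exact absurd h (h2 _ a.2 b).1
    · exact absurd h.symm (h2 _ b.2 a).1
    · exact congrArg _ (hτ h)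
  have hjb : ∀ a b, j a ≠ bar (j b) := by
    rintro (a | a) (b | b) h
    · refine h1 _ b.2 ?_
      have h : a.1 = bar b.1 := h
      rw [← h]; exact a.2
    · exact (h2 _ a.2 b).2 h
    · have h : τ a = bar b.1 := h
      exact (h2 _ b.2 a).2 (by rw [h, hbar])
    · exact hτb _ _ h
  let k : (B ⊕ X) ⊕ (B ⊕ X) → R := Sum.elim j (fun a => bar (j a))
  have hk : Function.Bijective k := by
    constructor
    · rintro (a | a) (b | b) h
      · exact congrArg _ (hj h)
      · exact absurd h (hjb _ _)
      · exact absurd h.symm (hjb _ _)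
      · exact congrArg _ (hj (hbi h))
    · intro e
      rcases h3 e with h | h | ⟨x, h | h⟩
      · exact ⟨.inl (.inl ⟨e, h⟩), rfl⟩
      · exact ⟨.inr (.inl ⟨_, h⟩), hbar e⟩
      · exact ⟨.inl (.inr x), h.symm⟩
      · exact ⟨.inr (.inr x), h.symm⟩
  rw [← Nat.card_congr (Equiv.ofBijective k hk), Nat.card_sum, Nat.card_sum]
  ring

lemma rank_le (b k : ℕ) (f : FreeGroup (Fin b) →* FreeGroup (Fin k))
    (hf : Function.Surjective f) : k ≤ b := by
  let A := Multiplicative (ZMod 2)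
  let i : (Fin k → A) → (Fin b → A) := fun v => FreeGroup.lift.symm ((FreeGroup.lift v).comp f)
  have hi : Function.Injective i := by
    intro v w h
    have h := FreeGroup.lift.symm.injective h
    apply FreeGroup.lift.injective
    ext1 x
    obtain ⟨y, hy⟩ := hf (FreeGroup.of x)
    have := DFunLike.congr_fun h y
    simpa [hy] using this
  have h := Nat.card_le_card_of_injective i hi
  have hA : Nat.card A = 2 := by simp [A]
  rw [Nat.card_fun, Nat.card_fun, hA, Nat.card_fin, Nat.card_fin] at h
  exact (Nat.pow_le_pow_iff_right (by norm_num)).1 h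

instance tors_normal (G : Type) [Group G] :
    (Subgroup.closure {g : G | IsOfFinOrder g}).Normal := by
  constructor
  intro n hn g
  induction hn using Subgroup.closure_induction with
  | mem x hx =>
    refine Subgroup.subset_closure ?_
    exact (MulAut.conj g).toMonoidHom.isOfFinOrder hx
  | one => simp
  | mul x y _ _ hx hy =>
    have := mul_mem hx hy
    simpa [mul_assoc] using this
  | inv x _ hx =>
    have := inv_mem hx
    simpa [mul_assoc] using this

lemma exists_section (G : Type) [Group G] (V E : Type)
    [MulAction G V] [MulAction G E] (bar : E → E) (src : E → V)
    (hsrc_smul : ∀ (g : G) (e : E), src (g • e) = g • src e)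
    (hbar_smul : ∀ (g : G) (e : E), bar (g • e) = g • bar e)
    (Δ : SimpleGraph V)
    (hΔ : ∀ v w : V, Δ.Adj v w ↔ ∃ e, src e = v ∧ src (bar e) = w)
    (htree : Δ.IsTree) (v0 : V) (Q : Type) (mk : V → Q) (hmk : Function.Surjective mk)
    (hQ : ∀ v w, mk v = mk w ↔ ∃ g : G, g • v = w) :
    ∃ (r : Q → ℕ) (σ : Q → V) (η : {x // x ≠ mk v0} → E), (∀ x, mk (σ x) = x) ∧ σ (mk v0) = v0 ∧
      ∀ x, src (bar (η x)) = σ x ∧ src (η x) = σ (mk (src (η x))) ∧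
        r (mk (src (η x))) < r x := by
  classical
  let r : Q → ℕ := fun x => sInf {n | ∃ v, mk v = x ∧ Δ.dist v0 v = n}
  have hr : ∀ v, r (mk v) ≤ Δ.dist v0 v := fun v => Nat.sInf_le ⟨v, rfl, rfl⟩
  have H1 : ∀ x : {x // x ≠ mk v0}, ∃ e : E, mk (src (bar e)) = x ∧ r (mk (src e)) < r x := by
    rintro ⟨x, hx⟩
    obtain ⟨v, hv, hd⟩ : r x ∈ {n | ∃ v, mk v = x ∧ Δ.dist v0 v = n} := by
      apply Nat.sInf_mem
      obtain ⟨v, hv⟩ := hmk x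
      exact ⟨_, v, hv, rfl⟩
    obtain ⟨w, hw⟩ := htree.connected.exists_walk_length_eq_dist v v0
    cases w with
    | nil => exact absurd hv.symm hx
    | cons ha w =>
      rename_i u
      obtain ⟨e, he1, he2⟩ := (hΔ _ _).1 ha.symm
      refine ⟨e, by rw [he2, hv], ?_⟩
      have h1 := hr u
      have h2 := SimpleGraph.dist_le w
      rw [SimpleGraph.Walk.length_cons] at hw
      rw [he1, ← hd]
      rw [SimpleGraph.dist_comm] at h2 hw
      omega
  choose ε hε1 hε2 using H1
  have hg : ∀ v w, mk v = mk w → ∃ g : G, g • v = w := fun v w => (hQ v w).1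
  choose γ hγ using hg
  have hwf : WellFounded (fun x y : Q => r x < r y) := (measure r).wf
  let step : ∀ x, (∀ y, r y < r x → {v // mk v = y}) → {v // mk v = x} := fun x ih =>
    if hx : x = mk v0 then ⟨v0, hx.symm⟩ else
      ⟨γ (src (ε ⟨x, hx⟩)) (ih (mk (src (ε ⟨x, hx⟩))) (hε2 ⟨x, hx⟩)).1
        (ih (mk (src (ε ⟨x, hx⟩))) (hε2 ⟨x, hx⟩)).2.symm • src (bar (ε ⟨x, hx⟩)),
        ((hQ _ _).2 ⟨_, rfl⟩).symm.trans (hε1 ⟨x, hx⟩)⟩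
  let s : ∀ x, {v // mk v = x} := hwf.fix step
  have hs : ∀ x, s x = step x (fun y _ => s y) := fun x => hwf.fix_eq step x
  refine ⟨r, fun x => (s x).1, fun x => γ (src (ε x)) (s (mk (src (ε x)))).1
    (s (mk (src (ε x)))).2.symm • ε x, fun x => (s x).2, ?_, ?_⟩
  · change (s (mk v0)).1 = v0
    rw [hs]; simp [step]
  · intro x
    have hms : ∀ (g : G) v, mk (g • v) = mk v := fun g v => ((hQ _ _).2 ⟨g, rfl⟩).symm
    simp only [hsrc_smul, hbar_smul, hms]
    have hcong : ∀ x y, x = y → (s x).1 = (s y).1 := by rintro x _ rfl; rfl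
    refine ⟨?_, ?_, hε2 x⟩
    rotate_left
    · rw [hγ]
      apply hcong
      rw [hsrc_smul, hms]
    rw [hs x.1]
    simp only [step, dif_neg x.2]

lemma main_aux (G : Type) [Group G] (V E : Type)
    [MulAction G V] [MulAction G E]
    (bar : E → E) (src : E → V)
    (hbar : ∀ e, bar (bar e) = e)
    (hsrc_smul : ∀ (g : G) (e : E), src (g • e) = g • src e)
    (hbar_smul : ∀ (g : G) (e : E), bar (g • e) = g • bar e)
    (hinj : ∀ e e' : E, src e = src e' → src (bar e) = src (bar e') → e = e')
    (Δ : SimpleGraph V)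
    (hΔ : ∀ v w : V, Δ.Adj v w ↔ ∃ e, src e = v ∧ src (bar e) = w)
    (htree : Δ.IsTree)
    [∀ v : V, Finite (MulAction.stabilizer G v)]
    (v0 : V) (Q : Type) (mk : V → Q)
    (hQ : ∀ v w, mk v = mk w ↔ ∃ g : G, g • v = w)
    (R : Type) (c : E → R) (hc : Function.Surjective c)
    (hR : ∀ v w, c v = c w ↔ ∃ g : G, g • v = w)
    (barR : R → R) (hbarR : ∀ e, barR (c e) = c (bar e))
    (r : Q → ℕ) (σ : Q → V) (η : {x // x ≠ mk v0} → E)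
    (hσ : ∀ x, mk (σ x) = x) (hσ0 : σ (mk v0) = v0)
    (hη1 : ∀ x, src (bar (η x)) = σ x) (hη2 : ∀ x, src (η x) = σ (mk (src (η x))))
    (hη3 : ∀ x, r (mk (src (η x))) < r x)
    (B : Set R) (hB1 : ∀ e ∈ B, barR e ∉ B)
    (hB2 : ∀ e ∈ B, ∀ x, e ≠ c (η x) ∧ e ≠ barR (c (η x)))
    (hB3 : ∀ e, e ∈ B ∨ barR e ∈ B ∨ ∃ x, e = c (η x) ∨ e = barR (c (η x))) :
    ∃ φ : G →* FreeGroup B, Function.Surjective φ ∧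
      φ.ker = Subgroup.closure {g : G | IsOfFinOrder g} := by
  classical
  have hbb : ∀ e, barR (barR e) = e := by
    intro e
    obtain ⟨e, rfl⟩ := hc e
    rw [hbarR, hbarR, hbar]
  have hcs : ∀ (g : G) e, c (g • e) = c e := fun g e => ((hR _ _).2 ⟨g, rfl⟩).symm
  have hms : ∀ (g : G) e, mk (g • e) = mk e := fun g e => ((hQ _ _).2 ⟨g, rfl⟩).symm
  let lam : R → FreeGroup B := fun e => if h : e ∈ B then FreeGroup.of ⟨e, h⟩ else
    if h : barR e ∈ B then (FreeGroup.of ⟨_, h⟩)⁻¹ else 1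
  have lam1 : ∀ e (h : e ∈ B), lam e = FreeGroup.of ⟨e, h⟩ := fun e h => dif_pos h
  have lamb : ∀ e, lam (barR e) = (lam e)⁻¹ := by
    intro e
    by_cases h : e ∈ B
    · have h' := hB1 e h
      simp only [lam, h, h', dif_pos, dif_neg, not_false_eq_true, hbb]
    · by_cases h' : barR e ∈ B
      · simp only [lam, h, h', dif_pos, dif_neg, not_false_eq_true, inv_inv]
      · simp only [lam, h, h', dif_neg, not_false_eq_true, inv_one, hbb]
  have lamη : ∀ x, lam (c (η x)) = 1 := by
    intro x
    have h1 : c (η x) ∉ B := fun h => (hB2 _ h x).1 rfl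
    have h2 : barR (c (η x)) ∉ B := fun h => (hB2 _ h x).2 rfl
    simp only [lam, h1, h2, dif_neg, not_false_eq_true]
  obtain ⟨p, hp0, hp⟩ : ∃ p : V → FreeGroup B, p v0 = 1 ∧
      ∀ e, p (src (bar e)) = p (src e) * lam (c e) := by
    let μ : V → V → FreeGroup B := fun u v =>
      if h : ∃ e, src e = u ∧ src (bar e) = v then lam (c h.choose) else 1
    have hμ : ∀ e, μ (src e) (src (bar e)) = lam (c e) := by
      intro e
      have h : ∃ e', src e' = src e ∧ src (bar e') = src (bar e) := ⟨e, rfl, rfl⟩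
      have h2 := hinj _ _ h.choose_spec.1 h.choose_spec.2
      simp only [μ]
      rw [dif_pos h, h2]
    obtain ⟨p, h0, h1⟩ := exists_pot Δ htree μ (by
      intro u v h
      obtain ⟨e, rfl, rfl⟩ := (hΔ _ _).1 h
      have := hμ (bar e)
      rw [hbar] at this
      rw [hμ, this, ← hbarR, lamb, mul_inv_cancel]) v0
    exact ⟨p, h0, fun e => by rw [h1 _ _ ((hΔ _ _).2 ⟨e, rfl, rfl⟩), hμ]⟩
  have hpm : ∀ (g : G) v, p (g • v) = p (g • v0) * p v := by
    intro g
    refine conn_ind Δ htree.connected _ v0 ?_ ?_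
    · rw [hp0, mul_one]
    · intro u v h ih
      obtain ⟨e, rfl, rfl⟩ := (hΔ _ _).1 h
      rw [hp, ← mul_assoc, ← ih, ← hsrc_smul, ← hbar_smul, hp, hsrc_smul, hcs]
  let φ : G →* FreeGroup B := MonoidHom.mk' (fun g => p (g • v0)) (by
    intro g h
    rw [mul_smul, hpm])
  have hpφ : ∀ g v, p (g • v) = φ g * p v := hpm
  have hpσ : ∀ n x, r x = n → p (σ x) = 1 := by
    intro n
    induction n using Nat.strong_induction_on with
    | _ n ih =>
      intro x hx
      by_cases h : x = mk v0
      · rw [h, hσ0, hp0]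
      · have h1 := hp (η ⟨x, h⟩)
        have h2 := ih _ (hx ▸ hη3 ⟨x, h⟩) _ rfl
        rw [hη1, lamη, mul_one, hη2 ⟨x, h⟩, h2] at h1
        exact h1
  have hpσ : ∀ x, p (σ x) = 1 := fun x => hpσ _ x rfl
  refine ⟨φ, ?_, ?_⟩
  · rw [← MonoidHom.range_eq_top, eq_top_iff, ← FreeGroup.closure_range_of, Subgroup.closure_le]
    rintro _ ⟨⟨b, hb⟩, rfl⟩
    obtain ⟨e, rfl⟩ := hc b
    obtain ⟨g, hg⟩ := (hQ _ _).1 (hσ (mk (src e))).symm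
    obtain ⟨t, ht⟩ := (hQ _ _).1 (hσ (mk (src (bar (g • e)))))
    refine ⟨t, ?_⟩
    have h1 := hp (g • e)
    rw [← ht, hpφ, hpσ, hsrc_smul, hg, hpσ, hcs, lam1 _ hb] at h1
    simpa using h1
  · apply le_antisymm
    swap
    · rw [Subgroup.closure_le]
      intro g hg
      exact (φ.isOfFinOrder hg).eq_one'
    set N := Subgroup.closure {g : G | IsOfFinOrder g} with hN
    have : N.Normal := tors_normal G
    have hst : ∀ (g : G) (v : V), g • v = v → g ∈ N := by
      intro g v h
      apply Subgroup.subset_closure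
      have := isOfFinOrder_of_finite (⟨g, h⟩ : MulAction.stabilizer G v)
      exact (MulAction.stabilizer G v).subtype.isOfFinOrder this
    have hh : ∀ v, ∃ g : G, g • σ (mk v) = v := fun v => (hQ _ _).1 (hσ _)
    choose h hh using hh
    let q : V → G ⧸ N := fun v => (h v : G)
    have hq : ∀ (g : G) v, q (g • v) = (g : G ⧸ N) * q v := by
      intro g v
      simp only [q]
      rw [← QuotientGroup.mk_mul, QuotientGroup.eq]
      rw [← inv_mem_iff, mul_inv_rev, inv_inv]
      apply hst _ (σ (mk v))
      have := hh (g • v)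
      rw [hms] at this
      rw [mul_smul, inv_smul_eq_iff, this, mul_smul, hh]
    have hqσ : ∀ x, q (σ x) = 1 := by
      intro x
      have := hh (σ x)
      rw [hσ] at this
      exact (QuotientGroup.eq_one_iff _).2 (hst _ _ this)
    let D : E → G ⧸ N := fun e => (q (src e))⁻¹ * q (src (bar e))
    have hDg : ∀ (g : G) e, D (g • e) = D e := by
      intro g e
      simp only [D, hbar_smul, hsrc_smul, hq]
      group
    have hDb : ∀ e, D (bar e) = (D e)⁻¹ := by
      intro e
      simp only [D, hbar]
      group
    have hDη : ∀ x, D (η x) = 1 := by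
      intro x
      simp only [D]
      rw [hη1, hη2, hqσ, hqσ]; simp
    let ψ : FreeGroup B →* G ⧸ N := FreeGroup.lift (fun b => D (Function.surjInv hc b.1))
    have hψ1 : ∀ e, c e ∈ B → ψ (lam (c e)) = D e := by
      intro e he
      rw [lam1 _ he]
      simp only [ψ, FreeGroup.lift_apply_of]
      obtain ⟨g, hg⟩ := (hR _ _).1 (Function.surjInv_eq hc (c e))
      exact (hDg g _).symm.trans (congrArg D hg)
    have hψ : ∀ e, ψ (lam (c e)) = D e := by
      intro e
      rcases hB3 (c e) with h | h | ⟨x, h | h⟩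
      · exact hψ1 e h
      · rw [hbarR] at h
        have := hψ1 _ h
        rw [← hbarR, lamb, map_inv, hDb] at this
        exact inv_injective this
      · rw [h, lamη, map_one]
        obtain ⟨g, hg⟩ := (hR _ _).1 h
        rw [← hDg g, hg, hDη]
      · rw [h, lamb, lamη, inv_one, map_one]
        rw [hbarR] at h
        obtain ⟨g, hg⟩ := (hR _ _).1 h
        rw [← hDg g, hg, hDb, hDη, inv_one]
    have hfin : ∀ v, ψ (p v) = q v := by
      refine conn_ind Δ htree.connected _ v0 ?_ ?_
      · rw [hp0, map_one, ← hσ0, hqσ]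
      · intro u v h ih
        obtain ⟨e, rfl, rfl⟩ := (hΔ _ _).1 h
        rw [hp, map_mul, ih, hψ]
        simp [D]
    intro g hg
    have h1 : p (g • v0) = 1 := hg
    have h2 := hfin (g • v0)
    rw [h1, map_one, hq, ← hσ0, hqσ, mul_one] at h2
    exact (QuotientGroup.eq_one_iff _).1 h2.symm

end TreeAct



/-- If `Γ` acts on a tree without inversions, with finite stabilizers and finite
quotient graph, then there is a short exact sequence
`1 → Γ_f → Γ → π₁(Γ\Δ) → 1` where `Γ_f` is the subgroup generated by the torsion
elements and `π₁(Γ\Δ)` is free of rank the first Betti number `b = 1 + e − v` of the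
quotient graph; in particular the corank of `Γ` equals `b`. -/
theorem corank_eq_betti_of_action_on_tree (G : Type) [Group G] (V E : Type)
    [MulAction G V] [MulAction G E]
    (bar : E → E) (src : E → V)
    (hbar : ∀ e, bar (bar e) = e) (hbne : ∀ e, bar e ≠ e)
    (hsrc_smul : ∀ (g : G) (e : E), src (g • e) = g • src e)
    (hbar_smul : ∀ (g : G) (e : E), bar (g • e) = g • bar e)
    (hinj : ∀ e e' : E, src e = src e' → src (bar e) = src (bar e') → e = e')
    (Δ : SimpleGraph V)
    (hΔ : ∀ v w : V, Δ.Adj v w ↔ ∃ e, src e = v ∧ src (bar e) = w)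
    (htree : Δ.IsTree)
    (hnoinv : ∀ (g : G) (e : E), g • e ≠ bar e)
    [∀ v : V, Finite (MulAction.stabilizer G v)]
    [∀ e : E, Finite (MulAction.stabilizer G e)]
    [Finite (Quotient (MulAction.orbitRel G V))]
    [Finite (Quotient (MulAction.orbitRel G E))]
    (b : ℕ)
    (hb : b + Nat.card (Quotient (MulAction.orbitRel G V)) =
      Nat.card (Quotient (MulAction.orbitRel G E)) / 2 + 1) :
    (∃ φ : G →* FreeGroup (Fin b), Function.Surjective φ ∧
      φ.ker = Subgroup.closure {g : G | IsOfFinOrder g}) ∧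
    (∀ (k : ℕ) (ψ : G →* FreeGroup (Fin k)), Function.Surjective ψ → k ≤ b) := by
  classical
  obtain ⟨v0⟩ := htree.connected.nonempty
  let Q := Quotient (MulAction.orbitRel G V)
  let R := Quotient (MulAction.orbitRel G E)
  let mk : V → Q := Quotient.mk _
  let c : E → R := Quotient.mk _
  have hmk : Function.Surjective mk := Quotient.mk_surjective
  have hc : Function.Surjective c := Quotient.mk_surjective
  have hQ : ∀ v w, mk v = mk w ↔ ∃ g : G, g • v = w := by
    intro v w
    rw [eq_comm]
    simp only [mk]
    rw [Quotient.eq]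
    exact Iff.rfl
  have hR : ∀ v w, c v = c w ↔ ∃ g : G, g • v = w := by
    intro v w
    rw [eq_comm]
    simp only [c]
    rw [Quotient.eq]
    exact Iff.rfl
  let barR : R → R := Quotient.map bar (by
    rintro _ b ⟨g, rfl⟩
    exact ⟨g, (hbar_smul g b).symm⟩)
  have hbarR : ∀ e, barR (c e) = c (bar e) := fun e => rfl
  have hbb : ∀ e, barR (barR e) = e := by
    intro e
    obtain ⟨e, rfl⟩ := hc e
    rw [hbarR, hbarR, hbar]
  have hbn : ∀ e, barR e ≠ e := by
    intro e h
    obtain ⟨e, rfl⟩ := hc e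
    rw [hbarR] at h
    obtain ⟨g, hg⟩ := (hR _ _).1 h.symm
    exact hnoinv g e hg
  have hms : ∀ (g : G) e, mk (g • e) = mk e := fun g e => ((hQ _ _).2 ⟨g, rfl⟩).symm
  obtain ⟨r, σ, η, hσ, hσ0, hη⟩ := TreeAct.exists_section G V E bar src hsrc_smul hbar_smul Δ hΔ
    htree v0 Q mk hmk hQ
  have hη1 := fun x => (hη x).1
  have hη2 := fun x => (hη x).2.1
  have hη3 := fun x => (hη x).2.2
  have htgt : ∀ e x, c e = c (η x) → mk (src (bar e)) = x := by
    intro e x h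
    obtain ⟨g, hg⟩ := (hR _ _).1 h
    rw [← hms g, ← hsrc_smul, ← hbar_smul, hg, hη1, hσ]
  have hsrc : ∀ e x, c e = c (η x) → mk (src e) = mk (src (η x)) := by
    intro e x h
    obtain ⟨g, hg⟩ := (hR _ _).1 h
    rw [← hms g, ← hsrc_smul, hg]
  obtain ⟨B, hB1, hB2, hB3, hcard⟩ := TreeAct.exists_B R {x // x ≠ mk v0} barR hbb hbn
    (fun x => c (η x))
    (by
      intro x y h
      have h1 := htgt _ _ h
      rw [hη1, hσ] at h1
      exact Subtype.ext h1)
    (by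
      intro x y h
      rw [hbarR] at h
      have h1 := hsrc _ _ h.symm
      have h2 := htgt _ _ h.symm
      rw [hη1, hσ] at h1
      rw [hbar] at h2
      have h3 := hη3 x
      have h4 := hη3 y
      rw [← h1] at h3
      rw [h2] at h4
      exact lt_asymm h3 h4)
  obtain ⟨φ, hφ, hker⟩ := TreeAct.main_aux G V E bar src hbar hsrc_smul hbar_smul hinj Δ hΔ htree
    v0 Q mk hQ R c hc hR barR hbarR r σ η hσ hσ0 hη1 hη2 hη3 B hB1 hB2 hB3
  have hBc : Nat.card B = b := by
    have h1 : Nat.card {x : Q // x ≠ mk v0} + 1 = Nat.card Q := by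
      have := Fintype.ofFinite Q
      rw [Nat.card_eq_fintype_card, Nat.card_eq_fintype_card, Fintype.card_subtype_compl,
        Fintype.card_subtype_eq]
      have : 0 < Fintype.card Q := Fintype.card_pos_iff.2 ⟨mk v0⟩
      omega
    change b + Nat.card Q = Nat.card R / 2 + 1 at hb
    omega
  have eB : B ≃ Fin b := Finite.equivFinOfCardEq hBc
  have iso := FreeGroup.freeGroupCongr eB
  have hker' : (iso.toMonoidHom.comp φ).ker = Subgroup.closure {g : G | IsOfFinOrder g} := by
    rw [← hker]
    ext g
    simp [MonoidHom.mem_ker]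
  have hsur : Function.Surjective (iso.toMonoidHom.comp φ) := iso.surjective.comp hφ
  refine ⟨⟨iso.toMonoidHom.comp φ, hsur, hker'⟩, ?_⟩
  intro k ψ hψ
  have hle : (iso.toMonoidHom.comp φ).ker ≤ ψ.ker := by
    rw [hker', Subgroup.closure_le]
    intro g hg
    exact (ψ.isOfFinOrder hg).eq_one'
  refine TreeAct.rank_le b k ((iso.toMonoidHom.comp φ).liftOfSurjective hsur ⟨ψ, hle⟩) ?_
  intro y
  obtain ⟨g, rfl⟩ := hψ y
  exact ⟨iso.toMonoidHom.comp φ g, MonoidHom.liftOfRightInverse_comp_apply _ _ _ ⟨ψ, hle⟩ g⟩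
end
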